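/- For all words x, y, z, w, the polynomial (xy choose w)_q · (yz choose w)_q − (xyz choose w)_q · (y choose w)_q has non-negative integer coefficients. -/

import Mathlib

open Polynomial

/-- q-binomial on reversed words: first list = word with rightmost letter first,
matching the recursion (ua choose vb)_q = (u choose vb)_q * q^{|vb|} + [a=b](u choose v)_q. -/
noncomputable def qBaux {α : Type*} [DecidableEq α] : List α → List α → Polynomial ℕ
  | _, [] => 1
  | [], _ :: _ => 0
  | a :: u, b :: v =>
      qBaux u (b :: v) * X ^ (v.length + 1) + if a = b then qBaux u v else 0

/-- q-binomial coefficient of words `u`, `v` given in natural reading order. -/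
noncomputable def qB {α : Type*} [DecidableEq α] (u v : List α) : Polynomial ℕ :=
  qBaux u.reverse v.reverse

/-- View a polynomial with natural coefficients as a polynomial with integer coefficients. -/
noncomputable def toZnat : Polynomial ℕ →+* Polynomial ℤ :=
  Polynomial.mapRingHom (Nat.castRingHom ℤ)

/-!
Reading `w` letter by letter inside `u` is a walk on the positions `0, …, |w|` of `w`: a letter
of `u` is either skipped, with weight `q ^ s` at position `s`, or matched with the next letter of
`w`. Hence `(u choose w)_q` is the corner entry of a product of upper bidiagonal matrices, one for
each letter of `u`. Bidiagonal matrices with non-negative entries have non-negative `2 × 2` minors,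
and by Cauchy–Binet so do their products. If `A`, `B`, `C` are the matrices of `x`, `y`, `z` and
`n = |w|`, then `(A B)₀ₙ (B C)₀ₙ - (A B C)₀ₙ B₀ₙ` is the sum over `s` and `t` of `A₀ₛ Cₜₙ` times the
minor of `B` on rows `0, s` and columns `t, n`.
-/

theorem sum_sum_eq_sum_sum_Ioi_of_diag_eq_zero {κ M : Type*} [AddCommMonoid M]
    [Fintype κ] [LinearOrder κ] [LocallyFiniteOrderTop κ] [LocallyFiniteOrderBot κ]
    (f : κ → κ → M) (hf : ∀ s, f s s = 0) :
    ∑ s, ∑ t, f s t = ∑ s, ∑ t ∈ Finset.Ioi s, (f t s + f s t) := by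
  rw [Finset.sum_sum_Ioi_add_eq_sum_sum_off_diag, Finset.sum_comm]
  refine Finset.sum_congr rfl fun s _ => ?_
  rw [Fintype.sum_eq_add_sum_compl s, hf, zero_add]

section MinorTwo

variable {ι κ μ ν R : Type*} [CommRing R]

/-- The `2 × 2` minor of the matrix `M` on rows `i, i'` and columns `j, j'`. The indices are not
required to be increasing or distinct. -/
def minorTwo (M : Matrix ι κ R) (i i' : ι) (j j' : κ) : R :=
  M i j * M i' j' - M i j' * M i' j

theorem minorTwo_rows_eq (M : Matrix ι κ R) (i : ι) (j j' : κ) : minorTwo M i i j j' = 0 := by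
  rw [minorTwo]
  ring

theorem minorTwo_cols_eq (M : Matrix ι κ R) (i i' : ι) (j : κ) : minorTwo M i i' j j = 0 :=
  sub_self _

theorem minorTwo_mul [Fintype κ] [LinearOrder κ] [LocallyFiniteOrderTop κ]
    [LocallyFiniteOrderBot κ] (A : Matrix ι κ R) (B : Matrix κ μ R) (i i' : ι) (j j' : μ) :
    minorTwo (A * B) i i' j j' =
      ∑ s, ∑ t ∈ Finset.Ioi s, minorTwo A i i' s t * minorTwo B s t j j' := by
  calc minorTwo (A * B) i i' j j'
      = ∑ s, ∑ t, A i s * A i' t * minorTwo B s t j j' := by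
        simp only [minorTwo, Matrix.mul_apply, Finset.sum_mul_sum, ← Finset.sum_sub_distrib]
        exact Finset.sum_congr rfl fun s _ => Finset.sum_congr rfl fun t _ => by ring
    _ = ∑ s, ∑ t ∈ Finset.Ioi s, minorTwo A i i' s t * minorTwo B s t j j' := by
        rw [sum_sum_eq_sum_sum_Ioi_of_diag_eq_zero _ fun s => by rw [minorTwo_rows_eq, mul_zero]]
        refine Finset.sum_congr rfl fun s _ => Finset.sum_congr rfl fun t _ => ?_
        simp only [minorTwo]
        ring

theorem mul_apply_mul_sub_eq_sum_minorTwo [Fintype κ] [Fintype μ] (A : Matrix ι κ R)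
    (B : Matrix κ μ R) (C : Matrix μ ν R) (i : ι) (k : κ) (m : μ) (l : ν) :
    (A * B) i m * (B * C) k l - (A * B * C) i l * B k m =
      ∑ t, ∑ s, A i s * C t l * minorTwo B k s t m := by
  simp only [Matrix.mul_apply, Finset.sum_mul, Finset.mul_sum, ← Finset.sum_sub_distrib]
  refine Finset.sum_congr rfl fun t _ => Finset.sum_congr rfl fun s _ => ?_
  rw [minorTwo]
  ring

end MinorTwo

/-- `IsTP2 S M` says that `M` is totally positive of order two in the weak sense, with the
subsemiring `S` in the role of the non-negative elements: entries and `2 × 2` minors of `M` lie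
in `S`. -/
structure IsTP2 {ι κ R : Type*} [LE ι] [LE κ] [CommRing R] (S : Subsemiring R)
    (M : Matrix ι κ R) : Prop where
  apply_mem (i : ι) (j : κ) : M i j ∈ S
  minorTwo_mem {i i' : ι} {j j' : κ} (hi : i ≤ i') (hj : j ≤ j') : minorTwo M i i' j j' ∈ S

namespace IsTP2

variable {ι κ μ ν R : Type*} [CommRing R] {S : Subsemiring R}

theorem of_apply_eq_zero_of_not_wcovBy [LinearOrder ι] {M : Matrix ι ι R}
    (hmem : ∀ i j, M i j ∈ S) (hzero : ∀ i j, ¬ i ⩿ j → M i j = 0) : IsTP2 S M where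
  apply_mem := hmem
  minorTwo_mem {i i' j j'} hi hj := by
    rcases hi.eq_or_lt with rfl | hi
    · exact minorTwo_rows_eq M i j j' ▸ zero_mem S
    rcases hj.eq_or_lt with rfl | hj
    · exact minorTwo_cols_eq M i i' j ▸ zero_mem S
    have hanti : M i j' * M i' j = 0 := by
      by_cases hij' : i ⩿ j'
      · have hi'j : ¬ i' ⩿ j := fun h => hij'.2 hi (h.1.trans_lt hj)
        rw [hzero i' j hi'j, mul_zero]
      · rw [hzero i j' hij', zero_mul]
    rw [minorTwo, hanti, sub_zero]
    exact mul_mem (hmem i j) (hmem i' j')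

theorem one [LinearOrder ι] : IsTP2 S (1 : Matrix ι ι R) := by
  refine of_apply_eq_zero_of_not_wcovBy (fun i j => ?_) fun i j hij =>
    Matrix.one_apply_ne fun h => hij h.wcovBy
  rw [Matrix.one_apply]
  split_ifs
  exacts [one_mem S, zero_mem S]

theorem mul [LE ι] [LE μ] [Fintype κ] [LinearOrder κ] [LocallyFiniteOrderTop κ]
    [LocallyFiniteOrderBot κ] {A : Matrix ι κ R} {B : Matrix κ μ R} (hA : IsTP2 S A)
    (hB : IsTP2 S B) : IsTP2 S (A * B) where
  apply_mem i j := by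
    rw [Matrix.mul_apply]
    exact sum_mem fun s _ => mul_mem (hA.apply_mem i s) (hB.apply_mem s j)
  minorTwo_mem hi hj := by
    rw [minorTwo_mul]
    refine sum_mem fun s _ => sum_mem fun t ht => ?_
    have hst : s ≤ t := (Finset.mem_Ioi.1 ht).le
    exact mul_mem (hA.minorTwo_mem hi hst) (hB.minorTwo_mem hst hj)

theorem list_prod [Fintype ι] [LinearOrder ι] [LocallyFiniteOrderTop ι]
    [LocallyFiniteOrderBot ι] {l : List (Matrix ι ι R)} (hl : ∀ M ∈ l, IsTP2 S M) :
    IsTP2 S l.prod :=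
  List.prod_induction (IsTP2 S) (fun _ _ => mul) one hl

theorem mul_apply_mul_sub_mem [LE κ] [LE μ] [Fintype κ] [Fintype μ] {A : Matrix ι κ R}
    {B : Matrix κ μ R} {C : Matrix μ ν R} {i : ι} {k : κ} {m : μ} {l : ν} (hB : IsTP2 S B)
    (hA : ∀ s, A i s ∈ S) (hC : ∀ t, C t l ∈ S) (hk : IsBot k) (hm : IsTop m) :
    (A * B) i m * (B * C) k l - (A * B * C) i l * B k m ∈ S := by
  rw [mul_apply_mul_sub_eq_sum_minorTwo]
  exact sum_mem fun t _ => sum_mem fun s _ =>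
    mul_mem (mul_mem (hA s) (hC t)) (hB.minorTwo_mem (hk s) (hm t))

end IsTP2

section qBRecursion

variable {α : Type*} [DecidableEq α]

theorem qB_nil_right (u : List α) : qB u [] = 1 := by
  simp [qB, qBaux]

theorem qB_nil_append_singleton (v : List α) (b : α) : qB [] (v ++ [b]) = 0 := by
  simp [qB, qBaux]

theorem qB_append_singleton (u v : List α) (a b : α) :
    qB (u ++ [a]) (v ++ [b]) =
      qB u (v ++ [b]) * X ^ (v.length + 1) + if a = b then qB u v else 0 := by
  simp [qB, qBaux]

end qBRecursion

section SubwordMatrix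

variable {α R : Type*} [DecidableEq α]

section Semiring

variable [Semiring R]

/-- The transfer matrix of the letter `a` on the positions of the word `w`: at position `i` the
letter is either skipped, with weight `q ^ i`, or matched with the letter `w[i]`, which moves to
position `i + 1`. -/
def letterMatrix (q : R) (w : List α) (a : α) :
    Matrix (Fin (w.length + 1)) (Fin (w.length + 1)) R :=
  fun i j => (if i = j then q ^ (j : ℕ) else 0) +
    if (i : ℕ) + 1 = j ∧ w[(i : ℕ)]? = some a then 1 else 0

/-- The transfer matrix of the word `u` on the positions of the word `w`: its entry at `(i, j)`
enumerates the ways to read the factor of `w` from position `i` to position `j` as a subword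
of `u`. -/
def subwordMatrix (q : R) (w u : List α) :
    Matrix (Fin (w.length + 1)) (Fin (w.length + 1)) R :=
  (u.map (letterMatrix q w)).prod

theorem subwordMatrix_append (q : R) (w u v : List α) :
    subwordMatrix q w (u ++ v) = subwordMatrix q w u * subwordMatrix q w v := by
  simp only [subwordMatrix, List.map_append, List.prod_append]

theorem mul_letterMatrix_apply_zero {ι : Type*} (q : R) (w : List α) (a : α)
    (M : Matrix ι (Fin (w.length + 1)) R) (i : ι) : (M * letterMatrix q w a) i 0 = M i 0 := by
  simp [Matrix.mul_apply, letterMatrix]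

theorem mul_letterMatrix_apply_succ {ι : Type*} (q : R) (w : List α) (a : α)
    (M : Matrix ι (Fin (w.length + 1)) R) (i : ι) (k : Fin w.length) :
    (M * letterMatrix q w a) i k.succ =
      M i k.succ * q ^ ((k : ℕ) + 1) + if a = w[k] then M i k.castSucc else 0 := by
  have hmatch (s : Fin (w.length + 1)) :
      ((s : ℕ) + 1 = k.succ ∧ w[(s : ℕ)]? = some a) ↔ (s = k.castSucc ∧ a = w[k]) := by
    simp only [Fin.val_succ, Nat.add_right_cancel_iff, Fin.ext_iff, Fin.val_castSucc]
    refine and_congr_right fun hs => ?_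
    simp [hs, eq_comm]
  simp only [Matrix.mul_apply, letterMatrix, hmatch, mul_add, Finset.sum_add_distrib, ite_and]
  simp

theorem map_qB_take (φ : ℕ[X] →+* R) (w u : List α) (j : Fin (w.length + 1)) :
    φ (qB u (w.take j)) = subwordMatrix (φ X) w u 0 j := by
  induction u using List.reverseRecOn generalizing j with
  | nil =>
    cases j using Fin.cases with
    | zero => simp [qB_nil_right, subwordMatrix]
    | succ k =>
      rw [Fin.val_succ, List.take_succ_eq_append_getElem k.isLt, qB_nil_append_singleton]
      simp [subwordMatrix, Matrix.one_apply_ne (Fin.succ_ne_zero k).symm]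
  | append_singleton u a ih =>
    have hconcat : subwordMatrix (φ X) w (u ++ [a]) =
        subwordMatrix (φ X) w u * letterMatrix (φ X) w a := by
      simp [subwordMatrix]
    rw [hconcat]
    cases j using Fin.cases with
    | zero =>
      rw [mul_letterMatrix_apply_zero, ← ih]
      simp [qB_nil_right]
    | succ k =>
      have htake : w.take k.succ = w.take k ++ [w[k]] := List.take_succ_eq_append_getElem k.isLt
      have hlen : (w.take k).length = k := List.length_take_of_le k.isLt.le
      rw [mul_letterMatrix_apply_succ, ← ih, ← ih, htake, qB_append_singleton, hlen]
      simp [apply_ite φ]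

theorem map_qB (φ : ℕ[X] →+* R) (w u : List α) :
    φ (qB u w) = subwordMatrix (φ X) w u 0 (Fin.last w.length) := by
  simpa using map_qB_take φ w u (Fin.last w.length)

end Semiring

section CommRing

variable [CommRing R] {S : Subsemiring R} {q : R}

theorem isTP2_letterMatrix (hq : q ∈ S) (w : List α) (a : α) : IsTP2 S (letterMatrix q w a) := by
  refine .of_apply_eq_zero_of_not_wcovBy (fun i j => ?_) fun i j hij => ?_
  · refine add_mem ?_ ?_ <;> split_ifs
    exacts [pow_mem hq _, zero_mem S, one_mem S, zero_mem S]
  · have hne : i ≠ j := fun h => hij h.wcovBy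
    have hsucc : (i : ℕ) + 1 ≠ j := fun h =>
      hij (Fin.covBy_iff.2 (Nat.covBy_iff_add_one_eq.2 h)).wcovBy
    simp [letterMatrix, hne, hsucc]

theorem isTP2_subwordMatrix (hq : q ∈ S) (w u : List α) : IsTP2 S (subwordMatrix q w u) := by
  refine .list_prod fun M hM => ?_
  obtain ⟨a, -, rfl⟩ := List.mem_map.1 hM
  exact isTP2_letterMatrix hq w a

theorem map_qB_mul_sub_mem_rangeS (φ : ℕ[X] →+* R) (x y z w : List α) :
    φ (qB (x ++ y) w) * φ (qB (y ++ z) w) - φ (qB (x ++ y ++ z) w) * φ (qB y w) ∈ φ.rangeS := by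
  have hφ : φ X ∈ φ.rangeS := ⟨X, rfl⟩
  simp only [map_qB, subwordMatrix_append]
  exact (isTP2_subwordMatrix hφ w y).mul_apply_mul_sub_mem
    ((isTP2_subwordMatrix hφ w x).apply_mem 0)
    (fun t => (isTP2_subwordMatrix hφ w z).apply_mem t _) Fin.zero_le Fin.le_last

end CommRing

end SubwordMatrix

theorem coeff_nonneg_of_mem_rangeS_toZnat {p : ℤ[X]} (hp : p ∈ toZnat.rangeS) (m : ℕ) :
    0 ≤ p.coeff m := by
  obtain ⟨r, rfl⟩ := hp
  simp [toZnat]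

/-- q-analogue of the dual Cauchy inequality: (xy choose w)(yz choose w) -
(xyz choose w)(y choose w) has non-negative coefficients. -/
theorem stmt19 {α : Type*} [DecidableEq α] (x y z w : List α) :
    ∀ m : ℕ,
      0 ≤ (toZnat (qB (x ++ y) w) * toZnat (qB (y ++ z) w)
            - toZnat (qB (x ++ y ++ z) w) * toZnat (qB y w)).coeff m :=
  coeff_nonneg_of_mem_rangeS_toZnat (map_qB_mul_sub_mem_rangeS toZnat x y z w)
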